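/- For every relay i ∈ {1,…,K}, writing U_i = {k_{i,1} < k_{i,2} < ⋯ < k_{i,B}}: H({Z_{k,i}}_{k∈U_i}) ≥ Σ_{j=1}^B H(X_{k_{i,j},i} | {W_{k_{i,j'}}, Z_{k_{i,j'}}}_{j'∈{1,…,j−1}}). -/

import Mathlib

/-!
Fix a relay `i` and write `U` for its users, `X_U` and `Z_U` for the families of messages `X_{k,i}`
and key parts `Z_{k,i}` with `k ∈ U`. The bound is the chain

`H(Z_U) ≥ H(Z_U, W) - H(W) ≥ H(X_U, W) - H(W) = H(X_U) = ∑ H(X_k | X_{<k}) ≥ ∑ H(X_k | (W, Z)_{<k})`.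

The steps are, in order: subadditivity (`ent_pair_le`), `X_U` being a function of `(Z_U, W)`, relay
security, and the chain rule together with `X_{k'}` being a function of `(W_{k'}, Z_{k'})`
(`sum_condEnt_le`).

Functional dependence is handled pointwise: `H(X | Y) = 0` means that on the support of `p` the
value of `Y` determines that of `X` (`det_of_condEnt_eq_zero`), and entropy is monotone under this
relation (`ent_le_of_det`). This covers relabelling of families as well. The only genuine inequality
is submodularity of entropy (`ent_submod`), which follows from `log t ≤ t - 1`.
-/

open scoped BigOperators

noncomputable def pr {Ω : Type} [Fintype Ω] {α : Type} [DecidableEq α]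
    (p : Ω → ℝ) (X : Ω → α) (a : α) : ℝ :=
  ∑ ω, if X ω = a then p ω else 0

noncomputable def ent {Ω : Type} [Fintype Ω] {α : Type} [Fintype α] [DecidableEq α]
    (q : ℕ) (p : Ω → ℝ) (X : Ω → α) : ℝ :=
  -∑ a, pr p X a * Real.logb q (pr p X a)

noncomputable def condEnt {Ω : Type} [Fintype Ω] {α β : Type}
    [Fintype α] [DecidableEq α] [Fintype β] [DecidableEq β]
    (q : ℕ) (p : Ω → ℝ) (X : Ω → α) (Y : Ω → β) : ℝ :=
  ent q p (fun ω => (X ω, Y ω)) - ent q p Y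

noncomputable def mutInfo {Ω : Type} [Fintype Ω] {α β : Type}
    [Fintype α] [DecidableEq α] [Fintype β] [DecidableEq β]
    (q : ℕ) (p : Ω → ℝ) (X : Ω → α) (Y : Ω → β) : ℝ :=
  ent q p X + ent q p Y - ent q p (fun ω => (X ω, Y ω))

noncomputable def condMutInfo {Ω : Type} [Fintype Ω] {α β γ : Type}
    [Fintype α] [DecidableEq α] [Fintype β] [DecidableEq β] [Fintype γ] [DecidableEq γ]
    (q : ℕ) (p : Ω → ℝ) (X : Ω → α) (Y : Ω → β) (Z : Ω → γ) : ℝ :=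
  condEnt q p X Z + condEnt q p Y Z - condEnt q p (fun ω => (X ω, Y ω)) Z

def IsPMF {Ω : Type} [Fintype Ω] (p : Ω → ℝ) : Prop :=
  (∀ ω, 0 ≤ p ω) ∧ ∑ ω, p ω = 1

def IndepRV {Ω : Type} [Fintype Ω] {α β : Type} [DecidableEq α] [DecidableEq β]
    (p : Ω → ℝ) (X : Ω → α) (Y : Ω → β) : Prop :=
  ∀ a b, pr p (fun ω => (X ω, Y ω)) (a, b) = pr p X a * pr p Y b

/-- The set of `B` relays `{k, k+1, …, k+B−1}` (indices mod `K`) associated with user `k`. -/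
def Bset (K B : ℕ) (k : Fin K) : Finset (Fin K) :=
  (Finset.range B).image fun j => ⟨((k : ℕ) + j) % K, Nat.mod_lt _ k.pos⟩

/-- The set of users associated with relay `i`. -/
def Uset (K B : ℕ) (i : Fin K) : Finset (Fin K) :=
  Finset.univ.filter fun k => i ∈ Bset K B k

/-! ### Finite probability and functional dependence -/

/-- On the support of `p`, the value of `Y` determines the value of `X`. -/
def Det {Ω α β : Type} (p : Ω → ℝ) (X : Ω → α) (Y : Ω → β) : Prop :=
  ∀ ω ω', 0 < p ω → 0 < p ω' → Y ω = Y ω' → X ω = X ω'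

section Entropy

variable {Ω : Type} [Fintype Ω] {p : Ω → ℝ} {α β γ : Type}
  [Fintype α] [DecidableEq α] [Fintype β] [DecidableEq β] [Fintype γ] [DecidableEq γ]

lemma pr_nonneg (hp : IsPMF p) (X : Ω → α) (a : α) : 0 ≤ pr p X a := by
  unfold pr
  exact Finset.sum_nonneg fun ω _ => by split_ifs <;> simp [hp.1 ω]

lemma pr_pos (hp : IsPMF p) (X : Ω → α) {ω : Ω} (h : 0 < p ω) : 0 < pr p X (X ω) := by
  unfold pr
  refine Finset.sum_pos' (fun ω _ => by split_ifs <;> simp [hp.1 ω]) ⟨ω, Finset.mem_univ _, ?_⟩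
  simpa using h

lemma sum_pr_mul (X : Ω → α) (g : α → ℝ) : ∑ a, pr p X a * g a = ∑ ω, p ω * g (X ω) := by
  simp only [pr, Finset.sum_mul]
  rw [Finset.sum_comm]
  refine Finset.sum_congr rfl fun ω _ => ?_
  simp [ite_mul]

lemma sum_pr (hp : IsPMF p) (X : Ω → α) : ∑ a, pr p X a = 1 := by
  have h := sum_pr_mul (p := p) X (fun _ => 1)
  simpa [hp.2] using h

lemma sum_pr_fst (X : Ω → α) (Y : Ω → β) (b : β) :
    ∑ a, pr p (fun ω => (X ω, Y ω)) (a, b) = pr p Y b := by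
  simp only [pr, Prod.mk.injEq]
  rw [Finset.sum_comm]
  refine Finset.sum_congr rfl fun ω _ => ?_
  by_cases h : Y ω = b <;> simp [h]

/-! ### Monotonicity of entropy under functional dependence -/

/-- Entropy as the expectation of `-log P(X)`, a sum over the sample space. This form makes random
variables with different ranges directly comparable. -/
lemma ent_eq (q : ℕ) (X : Ω → α) :
    ent q p X = -∑ ω, p ω * Real.logb q (pr p X (X ω)) := by
  unfold ent
  rw [sum_pr_mul X (fun a => Real.logb q (pr p X a))]

lemma pr_le_of_det (hp : IsPMF p) {X : Ω → α} {Y : Ω → β} (h : Det p X Y) {ω : Ω}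
    (hω : 0 < p ω) : pr p Y (Y ω) ≤ pr p X (X ω) := by
  unfold pr
  refine Finset.sum_le_sum fun ω' _ => ?_
  rcases (hp.1 ω').eq_or_lt with h0 | h0
  · simp [← h0]
  · by_cases hy : Y ω' = Y ω
    · simp [hy, h ω' ω h0 hω hy]
    · rw [if_neg hy]
      split_ifs <;> simp [h0.le]

/-- A function of `Y` has at most the entropy of `Y`. -/
lemma ent_le_of_det {q : ℕ} (hq : 1 < q) (hp : IsPMF p) {X : Ω → α} {Y : Ω → β}
    (h : Det p X Y) : ent q p X ≤ ent q p Y := by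
  rw [ent_eq, ent_eq, neg_le_neg_iff]
  refine Finset.sum_le_sum fun ω _ => ?_
  rcases (hp.1 ω).eq_or_lt with h0 | h0
  · simp [← h0]
  · exact mul_le_mul_of_nonneg_left
      (Real.logb_le_logb_of_le (by exact_mod_cast hq) (pr_pos hp Y h0) (pr_le_of_det hp h h0)) h0.le

lemma det_of_condEnt_eq_zero {q : ℕ} (hq : 1 < q) (hp : IsPMF p) {X : Ω → α} {Y : Ω → β}
    (h : condEnt q p X Y = 0) : Det p X Y := by
  have hq' : (1 : ℝ) < q := by exact_mod_cast hq
  have hle : ∀ ω, 0 < p ω → pr p (fun ω => (X ω, Y ω)) (X ω, Y ω) ≤ pr p Y (Y ω) := fun ω h0 =>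
    pr_le_of_det (X := Y) (Y := fun ω => (X ω, Y ω)) hp
      (fun _ _ _ _ he => (Prod.ext_iff.1 he).2) h0
  -- Equality of the two sums forces equality of the terms, which are already ordered.
  have hterm : ∀ ω ∈ Finset.univ, p ω * Real.logb q (pr p (fun ω => (X ω, Y ω)) (X ω, Y ω))
      ≤ p ω * Real.logb q (pr p Y (Y ω)) := by
    intro ω _
    rcases (hp.1 ω).eq_or_lt with h0 | h0
    · simp [← h0]
    · exact mul_le_mul_of_nonneg_left
        (Real.logb_le_logb_of_le hq' (pr_pos hp (fun ω => (X ω, Y ω)) h0) (hle ω h0)) h0.le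
  have hsum : ∑ ω, p ω * Real.logb q (pr p (fun ω => (X ω, Y ω)) (X ω, Y ω))
      = ∑ ω, p ω * Real.logb q (pr p Y (Y ω)) := by
    rw [condEnt, ent_eq, ent_eq] at h
    linarith
  have heq := (Finset.sum_eq_sum_iff_of_le hterm).1 hsum
  intro ω ω' h0 h0' hY
  by_contra hne
  have h1 := mul_left_cancel₀ h0.ne' (heq ω (Finset.mem_univ _))
  have h2 : pr p (fun ω => (X ω, Y ω)) (X ω, Y ω) = pr p Y (Y ω) :=
    Real.logb_injOn_pos hq' (Set.mem_Ioi.2 (pr_pos hp (fun ω => (X ω, Y ω)) h0))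
      (Set.mem_Ioi.2 (pr_pos hp Y h0)) h1
  -- If `X ω' ≠ X ω`, the mass at `ω'` counts towards `P(Y)` and not towards `P(X, Y)`.
  have h3 : pr p (fun ω => (X ω, Y ω)) (X ω, Y ω) < pr p Y (Y ω) := by
    unfold pr
    refine Finset.sum_lt_sum (fun η _ => ?_) ⟨ω', Finset.mem_univ _, ?_⟩
    · by_cases hy : Y η = Y ω
      · simp only [Prod.mk.injEq, hy, and_true, if_true]
        split_ifs <;> simp [hp.1 η]
      · simp [hy]
    · simpa [hY, Ne.symm hne] using h0'
  exact h3.ne h2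

/-! ### Submodularity and its consequences -/

/-- Submodularity of entropy, i.e. nonnegativity of `I(A; B | C)`. -/
lemma ent_submod {q : ℕ} (hq : 1 < q) (hp : IsPMF p) (A : Ω → α) (B : Ω → β) (C : Ω → γ) :
    ent q p (fun ω => (A ω, B ω, C ω)) + ent q p C
      ≤ ent q p (fun ω => (A ω, C ω)) + ent q p (fun ω => (B ω, C ω)) := by
  have hlq : 0 < Real.log q := Real.log_pos (by exact_mod_cast hq)
  set PABC := pr p (fun ω => (A ω, B ω, C ω)) with hABC
  set PAC := pr p (fun ω => (A ω, C ω)) with hAC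
  set PBC := pr p (fun ω => (B ω, C ω)) with hBC
  set PC := pr p C with hC
  -- The probability ratio whose expected logarithm is `-I(A; B | C)`.
  let r : α × β × γ → ℝ := fun x =>
    PAC (x.1, x.2.2) * PBC (x.2.1, x.2.2) / (PABC x * PC x.2.2)
  have hr : ∑ ω, p ω * r (A ω, B ω, C ω) ≤ 1 := by
    rw [← sum_pr_mul (p := p) (fun ω => (A ω, B ω, C ω)) r]
    calc ∑ x, PABC x * r x
        ≤ ∑ x : α × β × γ, PAC (x.1, x.2.2) * PBC (x.2.1, x.2.2) / PC x.2.2 := by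
          refine Finset.sum_le_sum fun x _ => ?_
          rcases (pr_nonneg hp (fun ω => (A ω, B ω, C ω)) x).eq_or_lt with h0 | h0
          · rw [hABC, ← h0, zero_mul]
            exact div_nonneg (mul_nonneg (pr_nonneg hp _ _) (pr_nonneg hp _ _)) (pr_nonneg hp _ _)
          · have h0' : PABC x ≠ 0 := h0.ne'
            apply le_of_eq
            simp only [r]
            rw [← mul_div_assoc, mul_div_mul_left _ _ h0']
      _ = ∑ c, (∑ a, PAC (a, c)) * (∑ b, PBC (b, c)) / PC c := by
          simp only [Fintype.sum_prod_type, Finset.sum_mul_sum, Finset.sum_div]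
          rw [Finset.sum_comm' (t' := Finset.univ) (s' := fun _ => Finset.univ) (by simp)]
          simp_rw [Finset.sum_comm (s := (Finset.univ : Finset γ))]
          rw [Finset.sum_comm]
      _ = ∑ c, PC c := by
          refine Finset.sum_congr rfl fun c _ => ?_
          rw [hAC, hBC, sum_pr_fst A C c, sum_pr_fst B C c, ← hC, mul_self_div_self]
      _ = 1 := sum_pr hp C
  have key : ∀ ω ∈ Finset.univ, p ω * (Real.logb q (PAC (A ω, C ω)) + Real.logb q (PBC (B ω, C ω))
      - Real.logb q (PABC (A ω, B ω, C ω)) - Real.logb q (PC (C ω)))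
      ≤ (p ω * r (A ω, B ω, C ω) - p ω) / Real.log q := by
    intro ω _
    rcases (hp.1 ω).eq_or_lt with h0 | h0
    · simp [← h0]
    have h1 : 0 < PABC (A ω, B ω, C ω) := pr_pos hp (fun ω => (A ω, B ω, C ω)) h0
    have h2 : 0 < PAC (A ω, C ω) := pr_pos hp (fun ω => (A ω, C ω)) h0
    have h3 : 0 < PBC (B ω, C ω) := pr_pos hp (fun ω => (B ω, C ω)) h0
    have h4 : 0 < PC (C ω) := pr_pos hp C h0
    have hrpos : 0 < r (A ω, B ω, C ω) := div_pos (mul_pos h2 h3) (mul_pos h1 h4)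
    have hlog : Real.log (r (A ω, B ω, C ω)) = Real.log (PAC (A ω, C ω))
        + Real.log (PBC (B ω, C ω)) - Real.log (PABC (A ω, B ω, C ω)) - Real.log (PC (C ω)) := by
      simp only [r]
      rw [Real.log_div (mul_pos h2 h3).ne' (mul_pos h1 h4).ne', Real.log_mul h2.ne' h3.ne',
        Real.log_mul h1.ne' h4.ne']
      ring
    have hle := Real.log_le_sub_one_of_pos hrpos
    simp only [Real.logb, ← add_div, ← sub_div, ← mul_div_assoc]
    rw [← hlog]
    gcongr
    nlinarith
  have hs := Finset.sum_le_sum key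
  rw [← Finset.sum_div, Finset.sum_sub_distrib, hp.2] at hs
  have hn : (∑ ω, p ω * r (A ω, B ω, C ω) - 1) / Real.log q ≤ 0 :=
    div_nonpos_of_nonpos_of_nonneg (by linarith) hlq.le
  simp only [mul_sub, mul_add, Finset.sum_sub_distrib, Finset.sum_add_distrib] at hs
  rw [ent_eq, ent_eq, ent_eq, ent_eq]
  linarith

lemma ent_const (hp : IsPMF p) (q : ℕ) {X : Ω → α} (h : ∀ ω ω', X ω = X ω') : ent q p X = 0 := by
  have : ∀ ω, pr p X (X ω) = 1 := fun ω => by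
    simp [pr, fun ω' => h ω' ω, hp.2]
  simp [ent_eq, this]

lemma ent_pair_le {q : ℕ} (hq : 1 < q) (hp : IsPMF p) (A : Ω → α) (B : Ω → β) :
    ent q p (fun ω => (A ω, B ω)) ≤ ent q p A + ent q p B := by
  have h := ent_submod hq hp A B (fun _ => ())
  have h0 := ent_const (X := fun _ : Ω => ()) hp q (fun _ _ => rfl)
  have h1 : ent q p (fun ω => (A ω, B ω)) ≤ ent q p (fun ω => (A ω, B ω, ())) :=
    ent_le_of_det hq hp fun _ _ _ _ he => by simpa using he
  have h2 : ent q p (fun ω => (A ω, ())) ≤ ent q p A :=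
    ent_le_of_det hq hp fun _ _ _ _ he => by simpa using he
  have h3 : ent q p (fun ω => (B ω, ())) ≤ ent q p B :=
    ent_le_of_det hq hp fun _ _ _ _ he => by simpa using he
  linarith

/-- Conditioning on more information lowers conditional entropy. -/
lemma condEnt_le_of_det {q : ℕ} (hq : 1 < q) (hp : IsPMF p) {X : Ω → α} {Y : Ω → β} {Y' : Ω → γ}
    (h : Det p Y' Y) : condEnt q p X Y ≤ condEnt q p X Y' := by
  have h1 := ent_submod hq hp X Y Y'
  have h2 : ent q p (fun ω => (Y ω, Y' ω)) ≤ ent q p Y :=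
    ent_le_of_det hq hp fun ω ω' h0 h0' he => Prod.ext he (h ω ω' h0 h0' he)
  have h3 : ent q p (fun ω => (X ω, Y ω)) ≤ ent q p (fun ω => (X ω, Y ω, Y' ω)) :=
    ent_le_of_det hq hp fun _ _ _ _ he => by
      simp only [Prod.mk.injEq] at he ⊢
      exact ⟨he.1, he.2.1⟩
  unfold condEnt
  linarith

end Entropy

/-! ### The chain rule and the key entropy bound -/

/-- Chain rule as an inequality: if each `C k` determines all earlier `X k'`, conditioning on `C k`
is at least as strong as conditioning on the earlier variables. -/
lemma sum_condEnt_le {Ω : Type} [Fintype Ω] {p : Ω → ℝ} {q : ℕ} (hq : 1 < q) (hp : IsPMF p)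
    {K : ℕ} {χ : Type} [Fintype χ] [DecidableEq χ] {γ : Fin K → Type} [∀ k, Fintype (γ k)]
    [∀ k, DecidableEq (γ k)] (X : Fin K → Ω → χ) (C : (k : Fin K) → Ω → γ k) (S : Finset (Fin K))
    (h : ∀ k ∈ S, ∀ k' ∈ S, k' < k → Det p (X k') (C k)) :
    ∑ k ∈ S, condEnt q p (X k) (C k) ≤ ent q p (fun ω => fun k : {k // k ∈ S} => X k.1 ω) := by
  induction S using Finset.induction_on_max with
  | empty =>
    rw [Finset.sum_empty, ent_const hp q]
    intro ω ω'
    funext k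
    exact absurd k.2 (Finset.notMem_empty _)
  | insert a S hmax ih =>
    have haS : a ∉ S := fun ha => lt_irrefl _ (hmax a ha)
    rw [Finset.sum_insert haS]
    have ih' := ih fun k hk k' hk' =>
      h k (Finset.mem_insert_of_mem hk) k' (Finset.mem_insert_of_mem hk')
    have h1 : condEnt q p (X a) (C a)
        ≤ condEnt q p (X a) (fun ω => fun k : {k // k ∈ S} => X k.1 ω) := by
      refine condEnt_le_of_det hq hp fun ω ω' h0 h0' he => ?_
      funext k
      exact h a (Finset.mem_insert_self _ _) k.1 (Finset.mem_insert_of_mem k.2) (hmax _ k.2)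
        ω ω' h0 h0' he
    have h2 : ent q p (fun ω => (X a ω, fun k : {k // k ∈ S} => X k.1 ω))
        ≤ ent q p (fun ω => fun k : {k // k ∈ insert a S} => X k.1 ω) := by
      refine ent_le_of_det hq hp fun ω ω' _ _ he => Prod.ext ?_ ?_
      · exact congrFun he ⟨a, Finset.mem_insert_self _ _⟩
      · funext k
        exact congrFun he ⟨k.1, Finset.mem_insert_of_mem k.2⟩
    unfold condEnt at h1 ih' ⊢
    linarith

/-- paper's Lemma 4: for every relay `i`, writing `U_i = {k_{i,1} < ⋯ < k_{i,B}}`,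
`H({Z_{k,i}}_{k∈U_i}) ≥ Σ_{j=1}^B H(X_{k_{i,j},i} | {W_{k_{i,j'}}, Z_{k_{i,j'}}}_{j' < j})`;
here the `j`-th summand is written as the summand for `k = k_{i,j} ∈ U_i`, conditioning on
the pairs `(W_{k'}, Z_{k'})` for the elements `k' ∈ U_i` with `k' < k`. -/
theorem hsa_key_entropy_lower_bound
    {K B L : ℕ} (hK : 2 ≤ K) (hB1 : 1 ≤ B) (hBK : B ≤ K) (hL : 1 ≤ L)
    {F : Type} [Field F] [Fintype F] [DecidableEq F]
    {Ω : Type} [Fintype Ω] (p : Ω → ℝ) (hp : IsPMF p)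
    {ζ χ υ : Type} [Fintype ζ] [DecidableEq ζ] [Fintype χ] [DecidableEq χ]
    [Fintype υ] [DecidableEq υ]
    (W : Fin K → Ω → (Fin L → F)) (Z : Fin K → Ω → ζ)
    (Xm : Fin K → Fin K → Ω → χ) (Y : Fin K → Ω → υ)
    -- the inputs are i.i.d. uniform on 𝔽_q^L
    (hW : ∀ w : Fin K → Fin L → F,
      pr p (fun ω => fun k => W k ω) w = 1 / (Fintype.card F : ℝ) ^ (K * L))
    -- the inputs are independent of the keys
    (hWZ : IndepRV p (fun ω => fun k => W k ω) (fun ω => fun k => Z k ω))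
    -- user messages are functions of the user's input and key
    (hX : ∀ k : Fin K,
      condEnt (Fintype.card F) p
        (fun ω => fun i : {i // i ∈ Bset K B k} => Xm k i.1 ω)
        (fun ω => (W k ω, Z k ω)) = 0)
    -- relay messages are functions of the received messages
    (hY : ∀ i : Fin K,
      condEnt (Fintype.card F) p (Y i)
        (fun ω => fun k : {k // k ∈ Uset K B i} => Xm k.1 i ω) = 0)
    -- the server recovers the sum of the inputs
    (hRec : condEnt (Fintype.card F) p
      (fun ω => ∑ k, W k ω) (fun ω => fun i => Y i ω) = 0)
    {ε : Type} [Fintype ε] [DecidableEq ε]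
    (Zki : Fin K → Fin K → Ω → ε)
    -- Z_{k,i}: the part of the key Z_k appearing in X_{k,i}
    (hZkiZ : ∀ k : Fin K,
      condEnt (Fintype.card F) p
        (fun ω => fun i : {i // i ∈ Bset K B k} => Zki k i.1 ω) (Z k) = 0)
    (hXki : ∀ k : Fin K, ∀ i ∈ Bset K B k,
      condEnt (Fintype.card F) p (Xm k i) (fun ω => (W k ω, Zki k i ω)) = 0)
    -- relay security
    (hRelaySec : ∀ i : Fin K,
      mutInfo (Fintype.card F) p
        (fun ω => fun k : {k // k ∈ Uset K B i} => Xm k.1 i ω)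
        (fun ω => fun k => W k ω) = 0) :
    ∀ i : Fin K,
      ent (Fintype.card F) p (fun ω => fun k : {k // k ∈ Uset K B i} => Zki k.1 i ω)
      ≥ ∑ k ∈ Uset K B i,
          condEnt (Fintype.card F) p (Xm k i)
            (fun ω => fun k' : {k' : Fin K // k' ∈ Uset K B i ∧ k' < k} =>
              (W k'.1 ω, Z k'.1 ω)) := by
  intro i
  have hq : 1 < Fintype.card F := Fintype.one_lt_card
  have hmem : ∀ k ∈ Uset K B i, i ∈ Bset K B k := fun k hk => (Finset.mem_filter.1 hk).2
  have hsub := ent_pair_le hq hp (fun ω => fun k : {k // k ∈ Uset K B i} => Zki k.1 i ω)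
    (fun ω => fun k => W k ω)
  have hfun : ent (Fintype.card F) p
        (fun ω => ((fun k : {k // k ∈ Uset K B i} => Xm k.1 i ω), fun k => W k ω))
      ≤ ent (Fintype.card F) p
        (fun ω => ((fun k : {k // k ∈ Uset K B i} => Zki k.1 i ω), fun k => W k ω)) := by
    refine ent_le_of_det hq hp fun ω ω' h0 h0' he => ?_
    obtain ⟨hZ, hW'⟩ := Prod.ext_iff.1 he
    refine Prod.ext ?_ hW'
    funext k
    exact det_of_condEnt_eq_zero hq hp (hXki k.1 i (hmem _ k.2)) ω ω' h0 h0'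
      (Prod.ext (congrFun hW' k.1) (congrFun hZ k))
  have hsec := hRelaySec i
  have hchain := sum_condEnt_le hq hp (fun k => Xm k i)
    (fun k ω => fun k' : {k' : Fin K // k' ∈ Uset K B i ∧ k' < k} => (W k'.1 ω, Z k'.1 ω))
    (Uset K B i) (fun k _ k' hk' hlt ω ω' h0 h0' he =>
      congrFun (det_of_condEnt_eq_zero hq hp (hX k') ω ω' h0 h0' (congrFun he ⟨k', hk', hlt⟩))
        ⟨i, hmem k' hk'⟩)
  unfold mutInfo at hsec
  linarith
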